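/- Let $n \ge 3$, $F > 0$, let $\sigma$ denote the surface measure on $\mathbb{S}^{n-2} \subset \mathbb{R}^{n-1}$ (normalized so that $\int_{\mathbb{R}^{n-1}} f(Y)\, dY = \int_0^\infty \int_{\mathbb{S}^{n-2}} f(r\omega)\, r^{n-2}\, d\sigma(\omega)\, dr$), and let $\alpha : \mathbb{S}^{n-2} \to \mathbb{R}$ be continuous with $c_1 \le \alpha(\omega) \le c_2$ for some $c_2 \ge c_1 > 0$. Define, for $X \in \mathbb{R}$, $Y \in \mathbb{R}^{n-1}\setminus\{0\}$, $\hat Y = Y/|Y|$: $\tilde K(X, Y) = e^{-FX}\, |Y|^{1-n} \Big( \chi_{\alpha(\hat Y)}\big(\tfrac{X - \alpha(\hat Y)|Y|^2}{|Y|}\big) + \chi_{\alpha(-\hat Y)}\big(\tfrac{-X + \alpha(-\hat Y)|Y|^2}{|Y|}\big) \Big)$ with $\chi_a(s) = e^{-F s^2/(2a)}$. Then $\tilde K$ is integrable on $\mathbb{R} \times \mathbb{R}^{n-1}$, its Fourier transform $\mathcal{F}\tilde K(\xi, \eta) = \int e^{-i(\xi X + \eta\cdot Y)} \tilde K(X,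 Y)\, dX\, dY$ is real and positive, and there exists $c' > 0$ such that for all $(\xi, \eta) \in \mathbb{R} \times \mathbb{R}^{n-1}$, $\mathcal{F}\tilde K(\xi, \eta) \;\ge\; \frac{c'}{\sqrt{1 + \xi^2 + |\eta|^2}}.$ -/

import Mathlib

open MeasureTheory Set
open scoped RealInnerProductSpace

lemma gaussFT (b : ℝ) (hb : 0 < b) (t : ℝ) :
    ∫ x : ℝ, Complex.exp (-(Complex.I * (t * x))) * (Real.exp (-(b * x ^ 2)) : ℝ)
      = ((Real.sqrt (Real.pi / b) * Real.exp (-(t ^ 2 / (4 * b))) : ℝ) : ℂ) := by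
  have h := fourierIntegral_gaussian (b := (b : ℂ)) (by simpa using hb) (-(t : ℂ))
  have e1 : ((Real.pi / b : ℂ)) ^ (1 / 2 : ℂ) = ((Real.sqrt (Real.pi / b) : ℝ) : ℂ) := by
    rw [Real.sqrt_eq_rpow, Complex.ofReal_cpow (by positivity)]
    push_cast
    rfl
  rw [e1] at h
  rw [Complex.ofReal_mul]
  convert h using 1
  · congr 1
    ext x
    push_cast
    congr 2 <;> ring
  · push_cast
    congr 2
    ring

lemma gaussCosInt (b : ℝ) (hb : 0 < b) (t : ℝ) :
    Integrable (fun x : ℝ => Real.cos (t * x) * Real.exp (-(b * x ^ 2))) := by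
  have h := integrable_exp_neg_mul_sq hb
  simp only [neg_mul] at h
  refine h.mono' (by fun_prop) (Filter.Eventually.of_forall fun x => ?_)
  rw [norm_mul, Real.norm_eq_abs, Real.norm_eq_abs, Real.abs_exp]
  exact mul_le_of_le_one_left (Real.exp_pos _).le (Real.abs_cos_le_one _)

lemma gaussCos (b : ℝ) (hb : 0 < b) (t : ℝ) :
    ∫ x : ℝ, Real.cos (t * x) * Real.exp (-(b * x ^ 2))
      = Real.sqrt (Real.pi / b) * Real.exp (-(t ^ 2 / (4 * b))) := by
  have h := congrArg Complex.re (gaussFT b hb t)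
  rw [Complex.ofReal_re] at h
  rw [← h, ← RCLike.re_eq_complex_re, ← integral_re]
  · congr 1
    ext x
    rw [RCLike.re_eq_complex_re, Complex.re_mul_ofReal]
    have : -(Complex.I * ((t : ℂ) * x)) = ((-(t * x) : ℝ) : ℂ) * Complex.I := by push_cast; ring
    rw [this, Complex.exp_ofReal_mul_I_re, Real.cos_neg]
  · have h2 := integrable_exp_neg_mul_sq hb
    simp only [neg_mul] at h2
    refine h2.mono' (by fun_prop) (Filter.Eventually.of_forall fun x => ?_)
    have : -(Complex.I * ((t : ℂ) * x)) = ((-(t * x) : ℝ) : ℂ) * Complex.I := by push_cast; ring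
    rw [norm_mul, this, Complex.norm_exp_ofReal_mul_I, one_mul, Complex.norm_real,
      Real.norm_eq_abs, Real.abs_exp]

lemma gaussCosHalf (b : ℝ) (hb : 0 < b) (t : ℝ) :
    2 * ∫ x in Ioi (0 : ℝ), Real.cos (t * x) * Real.exp (-(b * x ^ 2))
      = Real.sqrt (Real.pi / b) * Real.exp (-(t ^ 2 / (4 * b))) := by
  rw [← gaussCos b hb t, ← integral_comp_abs (f := fun x => Real.cos (t * x) * Real.exp (-(b * x ^ 2)))]
  congr 1
  ext x
  rw [sq_abs]
  congr 1
  rcases abs_choice x with h | h <;> rw [h]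
  rw [mul_neg, Real.cos_neg]

abbrev Eu (d : ℕ) := EuclideanSpace ℝ (Fin d)

lemma polar (d : ℕ) (hd : 2 ≤ d) (f : Eu d → ℝ) (hf : Integrable f) :
    Integrable (fun ω : Metric.sphere (0 : Eu d) 1 =>
      ∫ r in Ioi (0 : ℝ), r ^ (d - 1) * f (r • (ω : Eu d)))
        (volume : Measure (Eu d)).toSphere ∧
    ∫ Y, f Y = ∫ ω : Metric.sphere (0 : Eu d) 1,
      (∫ r in Ioi (0 : ℝ), r ^ (d - 1) * f (r • (ω : Eu d)))
        ∂(volume : Measure (Eu d)).toSphere := by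
  have : Nonempty (Fin d) := ⟨⟨0, by omega⟩⟩
  set μ : Measure (Eu d) := volume
  have hdim : Module.finrank ℝ (Eu d) = d := by simp [Eu]
  have hmp := μ.measurePreserving_homeomorphUnitSphereProd
  rw [hdim] at hmp
  set g : Metric.sphere (0 : (Eu d)) 1 × Ioi (0 : ℝ) → ℝ := fun p => f ((p.2 : ℝ) • (p.1 : (Eu d))) with hg
  have hcomp : ∀ x : ({0}ᶜ : Set (Eu d)), g (homeomorphUnitSphereProd (Eu d) x) = f x := by
    intro x
    have hx : ‖(x : (Eu d))‖ ≠ 0 := norm_ne_zero_iff.2 x.2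
    simp [hg, smul_smul, hx]
  have hint : Integrable g (μ.toSphere.prod (Measure.volumeIoiPow (d - 1))) := by
    rw [← hmp.integrable_comp_emb (Homeomorph.measurableEmbedding _)]
    have : g ∘ (homeomorphUnitSphereProd (Eu d)) = f ∘ Subtype.val := by ext x; exact hcomp x
    rw [this, ← integrableOn_iff_comap_subtypeVal (measurableSet_singleton _).compl]
    exact hf.integrableOn
  have hinner : ∀ ω : Metric.sphere (0 : (Eu d)) 1,
      ∫ r : Ioi (0 : ℝ), g (ω, r) ∂(Measure.volumeIoiPow (d - 1)) =
        ∫ r in Ioi (0 : ℝ), r ^ (d - 1) * f (r • (ω : (Eu d))) := by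
    intro ω
    simp only [Measure.volumeIoiPow, ENNReal.ofReal, hg]
    rw [integral_withDensity_eq_integral_smul,
        integral_subtype_comap measurableSet_Ioi fun a ↦ Real.toNNReal (a ^ (d - 1)) • f (a • (ω : (Eu d))),
        setIntegral_congr_fun measurableSet_Ioi fun x hx ↦ ?_]
    · rw [NNReal.smul_def, Real.coe_toNNReal _ (pow_nonneg hx.out.le _), smul_eq_mul]
    · exact (measurable_subtype_coe.pow_const _).real_toNNReal
  constructor
  · have := hint.integral_prod_left
    simpa only [hinner] using this
  · have h1 := hmp.integral_comp (Homeomorph.measurableEmbedding _) g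
    simp only [hcomp] at h1
    rw [integral_subtype_comap (measurableSet_singleton _).compl f, restrict_compl_singleton] at h1
    rw [h1, integral_prod _ hint]
    simp only [hinner]

open Pointwise in
lemma slab (d : ℕ) (hd : 2 ≤ d) : ∃ c : ℝ, 0 < c ∧ ∀ e : Eu d, ‖e‖ = 1 →
    ∀ δ : ℝ, 0 < δ → δ ≤ 1 → c * δ ≤
      (volume : Measure (Eu d)).toSphere.real
        {ω | |⟪e, (ω : Eu d)⟫| ≤ δ} := by
  have hR : (0 : ℝ) < 2 * d := by positivity
  refine ⟨((2 * d : ℝ)⁻¹) ^ d, by positivity, fun e he δ hδ hδ1 => ?_⟩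
  set R : ℝ := 2 * d
  let i0 : Fin d := ⟨0, by omega⟩
  let i1 : Fin d := ⟨1, by omega⟩
  have hi01 : i1 ≠ i0 := by simp [i0, i1]
  obtain ⟨b, hb⟩ := Orthonormal.exists_orthonormalBasis_extension_of_card_eq (𝕜 := ℝ) (E := Eu d)
    (ι := Fin d) (by simp [Eu]) (v := fun _ => e) (s := {i0}) (by
      constructor
      · intro i; simpa using he
      · intro i j hij; exact absurd (Subsingleton.elim i j) hij)
  have hb0 : b i0 = e := hb i0 rfl
  let lo : Fin d → ℝ := fun i => if i = i0 then 0 else R⁻¹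
  let hi : Fin d → ℝ := fun i => if i = i0 then δ * R⁻¹ else 2 * R⁻¹
  let box : Set (Fin d → ℝ) := Set.pi univ fun i => Icc (lo i) (hi i)
  have hboxv : volume box = ENNReal.ofReal ((R⁻¹) ^ d * δ) := by
    rw [volume_pi_pi]
    simp only [Real.volume_Icc]
    rw [← ENNReal.ofReal_prod_of_nonneg]
    · congr 1
      have : ∀ i, hi i - lo i = R⁻¹ * (if i = i0 then δ else 1) := by
        intro i
        simp only [hi, lo]
        split_ifs <;> ring
      simp only [this, Finset.prod_mul_distrib, Finset.prod_const, Finset.card_univ,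
        Fintype.card_fin, Finset.prod_ite_eq', Finset.mem_univ, if_true]
    · intro i _
      simp only [hi, lo]
      split_ifs
      · simp; positivity
      · have : 0 < R⁻¹ := by positivity
        linarith
  have hmp : MeasurePreserving (fun Y : (Eu d) => (WithLp.ofLp (b.repr Y) : Fin d → ℝ)) volume volume :=
    (PiLp.volume_preserving_ofLp (Fin d)).comp b.measurePreserving_repr
  have hboxm : MeasurableSet box := MeasurableSet.univ_pi fun i => measurableSet_Icc
  have hms : MeasurableSet {ω : Metric.sphere (0 : (Eu d)) 1 | |⟪e, (ω : (Eu d))⟫| ≤ δ} := by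
    apply measurableSet_le <;> fun_prop
  have hsub : (fun Y : (Eu d) => (WithLp.ofLp (b.repr Y) : Fin d → ℝ)) ⁻¹' box ⊆
      Ioo (0 : ℝ) 1 • ((Subtype.val : Metric.sphere (0 : Eu d) 1 → Eu d) '' {ω : Metric.sphere (0 : (Eu d)) 1 | |⟪e, (ω : (Eu d))⟫| ≤ δ}) := by
    intro Y hY
    have hY' : ∀ i, lo i ≤ b.repr Y i ∧ b.repr Y i ≤ hi i := fun i => hY i (mem_univ i)
    have hRi : 0 < R⁻¹ := by positivity
    have hn : ‖Y‖ ^ 2 = ∑ i, (b.repr Y i) ^ 2 := by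
      rw [← b.repr.norm_map Y, EuclideanSpace.real_norm_sq_eq]
    have hlow : R⁻¹ ≤ ‖Y‖ := by
      apply le_of_sq_le_sq _ (norm_nonneg _)
      rw [hn]
      have h1 := (hY' i1).1
      simp only [lo, if_neg hi01] at h1
      calc R⁻¹ ^ 2 ≤ (b.repr Y i1) ^ 2 := by gcongr
        _ ≤ _ := Finset.single_le_sum (f := fun i => (b.repr Y i) ^ 2)
            (fun i _ => sq_nonneg _) (Finset.mem_univ i1)
    have hup : ‖Y‖ < 1 := by
      apply lt_of_pow_lt_pow_left₀ 2 zero_le_one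
      rw [hn, one_pow]
      have hle : ∑ i, (b.repr Y i) ^ 2 ≤ ∑ _i : Fin d, (2 * R⁻¹) ^ 2 := by
        apply Finset.sum_le_sum
        intro i _
        have h1 := hY' i
        simp only [lo, hi] at h1
        split_ifs at h1
        · have : δ * R⁻¹ ≤ 2 * R⁻¹ := by gcongr; linarith
          exact pow_le_pow_left₀ h1.1 (h1.2.trans this) 2
        · exact pow_le_pow_left₀ (hRi.le.trans h1.1) h1.2 2
      refine hle.trans_lt ?_
      have hd' : (2 : ℝ) ≤ d := by exact_mod_cast hd
      simp only [Finset.sum_const, Finset.card_univ, Fintype.card_fin, nsmul_eq_mul, R]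
      have : (d : ℝ) * (2 * (2 * (d : ℝ))⁻¹) ^ 2 = (d : ℝ)⁻¹ := by field_simp
      rw [this]
      exact inv_lt_one_of_one_lt₀ (by linarith)
    have hpos : 0 < ‖Y‖ := hRi.trans_le hlow
    refine ⟨‖Y‖, ⟨hpos, hup⟩, ‖Y‖⁻¹ • Y, ⟨⟨‖Y‖⁻¹ • Y, by simp [norm_smul, hpos.ne']⟩, ?_, rfl⟩, ?_⟩
    · have h0 := hY' i0
      simp only [lo, hi, if_true, b.repr_apply_apply, hb0] at h0
      simp only [mem_ofPred_eq, inner_smul_right]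
      rw [abs_of_nonneg (mul_nonneg (by positivity) h0.1), inv_mul_le_iff₀ hpos]
      calc _ ≤ δ * R⁻¹ := h0.2
        _ ≤ δ * ‖Y‖ := by gcongr
        _ = _ := mul_comm _ _
    · simp [smul_smul, hpos.ne']
  have key : ENNReal.ofReal ((R⁻¹) ^ d * δ) ≤ (volume : Measure (Eu d)).toSphere
      {ω | |⟪e, (ω : (Eu d))⟫| ≤ δ} := by
    rw [Measure.toSphere_apply' _ hms, ← hboxv, ← hmp.measure_preimage hboxm.nullMeasurableSet]
    refine (measure_mono hsub).trans ?_
    refine le_mul_of_one_le_left zero_le ?_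
    simp only [Eu, finrank_euclideanSpace, Fintype.card_fin]
    exact_mod_cast (by omega : 1 ≤ d)
  exact (ENNReal.ofReal_le_iff_le_toReal (measure_ne_top _ _)).1 key

lemma gaussFTInt (b : ℝ) (hb : 0 < b) (t : ℝ) :
    Integrable (fun x : ℝ =>
      Complex.exp (-(Complex.I * (t * x))) * (Real.exp (-(b * x ^ 2)) : ℝ)) := by
  have h2 := integrable_exp_neg_mul_sq hb
  simp only [neg_mul] at h2
  refine h2.mono' (by fun_prop) (Filter.Eventually.of_forall fun x => ?_)
  have : -(Complex.I * ((t : ℂ) * x)) = ((-(t * x) : ℝ) : ℂ) * Complex.I := by push_cast; ring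
  rw [norm_mul, this, Complex.norm_exp_ofReal_mul_I, one_mul, Complex.norm_real,
    Real.norm_eq_abs, Real.abs_exp]

noncomputable def gker (d : ℕ) (F : ℝ) (α : Eu d → ℝ) (X : ℝ) (Y : Eu d) : ℝ :=
  ‖Y‖ ^ (-(d : ℝ)) * Real.exp (-(F * α (‖Y‖⁻¹ • Y) * ‖Y‖ ^ 2 / 2)) *
    Real.exp (-(F / (2 * α (‖Y‖⁻¹ • Y) * ‖Y‖ ^ 2) * X ^ 2))

noncomputable def Gker (d : ℕ) (F : ℝ) (α : Eu d → ℝ) (B : ℝ) (Y : Eu d) : ℝ :=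
  ‖Y‖ ^ (1 - (d : ℝ)) * Real.sqrt (2 * Real.pi * α (‖Y‖⁻¹ • Y) / F) *
    Real.exp (-(α (‖Y‖⁻¹ • Y) * B / 2 * ‖Y‖ ^ 2))

lemma unit_mem {d : ℕ} {Y : Eu d} (hY : Y ≠ 0) : ‖Y‖⁻¹ • Y ∈ Metric.sphere (0 : Eu d) 1 := by
  simp [norm_smul, hY]

lemma ae_ne0 (d : ℕ) (hd : 2 ≤ d) : ∀ᵐ Y : Eu d, Y ≠ 0 := by
  have : Nonempty (Fin d) := ⟨⟨0, by omega⟩⟩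
  rw [ae_iff]
  simp

lemma ker_ft (d : ℕ) (F c₁ c₂ : ℝ) (hF : 0 < F) (hc₁ : 0 < c₁) (α : Eu d → ℝ)
    (hα : ∀ ω ∈ Metric.sphere (0 : Eu d) 1, c₁ ≤ α ω ∧ α ω ≤ c₂) (ξ : ℝ) (Y : Eu d) (hY : Y ≠ 0) :
    Integrable (fun X : ℝ => Complex.exp (-(Complex.I * (ξ * X))) * (gker d F α X Y : ℝ)) ∧
    ∫ X : ℝ, Complex.exp (-(Complex.I * (ξ * X))) * (gker d F α X Y : ℝ) =
      (Gker d F α (ξ ^ 2 / F + F) Y : ℝ) := by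
  have ha : 0 < α (‖Y‖⁻¹ • Y) := hc₁.trans_le (hα _ (unit_mem hY)).1
  have hr : 0 < ‖Y‖ := norm_pos_iff.2 hY
  set a := α (‖Y‖⁻¹ • Y) with hadef
  set r := ‖Y‖ with hrdef
  have hb : 0 < F / (2 * a * r ^ 2) := by positivity
  have hrw : (fun X : ℝ => Complex.exp (-(Complex.I * (ξ * X))) * (gker d F α X Y : ℝ)) =
    fun X : ℝ => ((r ^ (-(d : ℝ)) * Real.exp (-(F * a * r ^ 2 / 2)) : ℝ) : ℂ) *
      (Complex.exp (-(Complex.I * (ξ * X))) *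
        (Real.exp (-(F / (2 * a * r ^ 2) * X ^ 2)) : ℝ)) := by
    ext X
    rw [gker, ← hrdef, ← hadef]
    push_cast
    ring
  rw [hrw]
  refine ⟨(gaussFTInt _ hb ξ).const_mul _, ?_⟩
  rw [integral_const_mul, gaussFT _ hb, ← Complex.ofReal_mul, Gker, ← hrdef, ← hadef]
  congr 1
  have e1 : Real.sqrt (Real.pi / (F / (2 * a * r ^ 2))) = r * Real.sqrt (2 * Real.pi * a / F) := by
    rw [show Real.pi / (F / (2 * a * r ^ 2)) = r ^ 2 * (2 * Real.pi * a / F) by field_simp,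
      Real.sqrt_mul (by positivity), Real.sqrt_sq hr.le]
  have e2 : r ^ (1 - (d : ℝ)) = r ^ (-(d : ℝ)) * r := by
    rw [show (1 - (d : ℝ)) = -(d : ℝ) + 1 by ring, Real.rpow_add hr, Real.rpow_one]
  have e3 : Real.exp (-(a * (ξ ^ 2 / F + F) / 2 * r ^ 2)) =
      Real.exp (-(F * a * r ^ 2 / 2)) * Real.exp (-(ξ ^ 2 / (4 * (F / (2 * a * r ^ 2))))) := by
    rw [← Real.exp_add]
    congr 1
    field_simp
    ring
  rw [e1, e2, e3]
  ring

lemma a_aem (d : ℕ) (hd : 2 ≤ d) (α : Eu d → ℝ)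
    (hαcont : ContinuousOn α (Metric.sphere (0 : Eu d) 1)) :
    AEMeasurable (fun Y : Eu d => α (‖Y‖⁻¹ • Y)) := by
  have : Nonempty (Fin d) := ⟨⟨0, by omega⟩⟩
  have h : ContinuousOn (fun Y : Eu d => α (‖Y‖⁻¹ • Y)) {0}ᶜ := by
    refine hαcont.comp (f := fun Y : Eu d => ‖Y‖⁻¹ • Y) (t := Metric.sphere (0 : Eu d) 1) ?_ ?_
    · refine ContinuousOn.smul (ContinuousOn.inv₀ continuous_norm.continuousOn ?_) continuousOn_id
      intro x hx
      exact norm_ne_zero_iff.2 hx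
    · intro Y hY
      exact unit_mem hY
  have h2 := h.aemeasurable (μ := volume) (measurableSet_singleton (0 : Eu d)).compl
  rwa [restrict_compl_singleton] at h2

lemma G_int (d : ℕ) (hd : 2 ≤ d) (F c₁ c₂ : ℝ) (hF : 0 < F) (hc₁ : 0 < c₁) (α : Eu d → ℝ)
    (hαcont : ContinuousOn α (Metric.sphere (0 : Eu d) 1))
    (hα : ∀ ω ∈ Metric.sphere (0 : Eu d) 1, c₁ ≤ α ω ∧ α ω ≤ c₂) (B : ℝ) (hB : 0 < B) :
    Integrable (Gker d F α B) := by
  have : Nonempty (Fin d) := ⟨⟨0, by omega⟩⟩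
  have ham := a_aem d hd α hαcont
  have hrad : Integrable (fun Y : Eu d => (fun r : ℝ => r ^ (1 - (d : ℝ)) *
      Real.sqrt (2 * Real.pi * c₂ / F) * Real.exp (-(c₁ * B / 2 * r ^ 2))) ‖Y‖) := by
    refine (integrable_fun_norm_addHaar (F := ℝ) (volume : Measure (Eu d)) (f := fun r : ℝ =>
      r ^ (1 - (d : ℝ)) * Real.sqrt (2 * Real.pi * c₂ / F) *
        Real.exp (-(c₁ * B / 2 * r ^ 2)))).2 ?_
    have h := ((integrable_exp_neg_mul_sq (b := c₁ * B / 2) (by positivity)).const_mul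
      (Real.sqrt (2 * Real.pi * c₂ / F))).integrableOn (s := Ioi 0)
    refine h.congr_fun (fun r hr => ?_) measurableSet_Ioi
    have hr : 0 < r := hr
    have e : r ^ (d - 1) * r ^ (1 - (d : ℝ)) = 1 := by
      rw [← Real.rpow_natCast, ← Real.rpow_add hr, Nat.cast_sub (by omega)]
      simp
    simp only [finrank_euclideanSpace, Fintype.card_fin, smul_eq_mul]
    rw [← mul_assoc, ← mul_assoc, e, one_mul, neg_mul]
  refine hrad.mono' ?_ ?_
  · apply AEMeasurable.aestronglyMeasurable
    have hq : Measurable (fun q : Eu d × ℝ => ‖q.1‖ ^ (1 - (d : ℝ)) *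
        Real.sqrt (2 * Real.pi * q.2 / F) * Real.exp (-(q.2 * B / 2 * ‖q.1‖ ^ 2))) := by
      fun_prop
    exact hq.comp_aemeasurable (f := fun Y : Eu d => (Y, α (‖Y‖⁻¹ • Y))) (aemeasurable_id'.prodMk ham)
  · filter_upwards [ae_ne0 d hd] with Y hY
    have ha := hα _ (unit_mem hY)
    have ha0 : 0 < α (‖Y‖⁻¹ • Y) := hc₁.trans_le ha.1
    rw [Gker, Real.norm_of_nonneg (by positivity)]
    gcongr
    · exact ha.2
    · exact ha.1

lemma g_int (d : ℕ) (hd : 2 ≤ d) (F c₁ c₂ : ℝ) (hF : 0 < F) (hc₁ : 0 < c₁) (α : Eu d → ℝ)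
    (hαcont : ContinuousOn α (Metric.sphere (0 : Eu d) 1))
    (hα : ∀ ω ∈ Metric.sphere (0 : Eu d) 1, c₁ ≤ α ω ∧ α ω ≤ c₂) :
    Integrable (fun p : ℝ × Eu d => gker d F α p.1 p.2) := by
  have ham := a_aem d hd α hαcont
  have ham2 : AEMeasurable (fun p : ℝ × Eu d => α (‖p.2‖⁻¹ • p.2)) :=
    ham.comp_snd
  have hm : AEStronglyMeasurable (fun p : ℝ × Eu d => gker d F α p.1 p.2)
      ((volume : Measure ℝ).prod (volume : Measure (Eu d))) := by
    apply AEMeasurable.aestronglyMeasurable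
    change AEMeasurable _ (volume : Measure (ℝ × Eu d))
    have hq : Measurable (fun q : (ℝ × Eu d) × ℝ => ‖q.1.2‖ ^ (-(d : ℝ)) *
        Real.exp (-(F * q.2 * ‖q.1.2‖ ^ 2 / 2)) *
        Real.exp (-(F / (2 * q.2 * ‖q.1.2‖ ^ 2) * q.1.1 ^ 2))) := by
      fun_prop
    exact hq.comp_aemeasurable (f := fun p : ℝ × Eu d => (p, α (‖p.2‖⁻¹ • p.2)))
      (aemeasurable_id'.prodMk ham2)
  change Integrable _ ((volume : Measure ℝ).prod (volume : Measure (Eu d)))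
  have hnn : ∀ X Y, 0 ≤ gker d F α X Y := by intro X Y; unfold gker; positivity
  have hX : ∀ Y : Eu d, Y ≠ 0 → Integrable (fun X => gker d F α X Y) ∧
      ∫ X, gker d F α X Y = Gker d F α F Y := by
    intro Y hY
    have h := ker_ft d F c₁ c₂ hF hc₁ α hα 0 Y hY
    simp only [Complex.ofReal_zero, zero_mul, mul_zero, neg_zero, Complex.exp_zero, one_mul] at h
    have h0 : (0 : ℝ) ^ 2 / F + F = F := by simp
    rw [h0, integral_complex_ofReal] at h
    refine ⟨?_, by exact_mod_cast h.2⟩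
    simpa using h.1.re
  rw [integrable_prod_iff' hm]
  constructor
  · filter_upwards [ae_ne0 d hd] with Y hY
    exact (hX Y hY).1
  · refine (G_int d hd F c₁ c₂ hF hc₁ α hαcont hα F hF).congr ?_
    filter_upwards [ae_ne0 d hd] with Y hY
    rw [← (hX Y hY).2]
    congr 1
    ext X
    rw [Real.norm_of_nonneg (hnn _ _)]

lemma norm_osc (θ : ℝ) : ‖Complex.exp (-(Complex.I * θ))‖ = 1 := by
  rw [show -(Complex.I * (θ : ℂ)) = ((-θ : ℝ) : ℂ) * Complex.I by push_cast; ring,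
    Complex.norm_exp_ofReal_mul_I]

/-- The Fourier transform as an integral of a cosine. -/
lemma ft_eq (d : ℕ) (hd : 2 ≤ d) (F c₁ c₂ : ℝ) (hF : 0 < F) (hc₁ : 0 < c₁) (α : Eu d → ℝ)
    (hαcont : ContinuousOn α (Metric.sphere (0 : Eu d) 1))
    (hα : ∀ ω ∈ Metric.sphere (0 : Eu d) 1, c₁ ≤ α ω ∧ α ω ≤ c₂)
    (K : ℝ → Eu d → ℝ) (hK : ∀ X Y, K X Y = gker d F α X Y + gker d F α X (-Y))
    (hKi : Integrable (fun p : ℝ × Eu d => K p.1 p.2)) (ξ : ℝ) (η : Eu d) :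
    (∫ X : ℝ, ∫ Y : Eu d,
          Complex.exp (-(Complex.I * (ξ * X + (⟪η, Y⟫ : ℝ)))) * (K X Y : ℝ)) =
      ((∫ Y : Eu d, 2 * Real.cos ⟪η, Y⟫ * Gker d F α (ξ ^ 2 / F + F) Y : ℝ) : ℂ) := by
  have hGi := G_int d hd F c₁ c₂ hF hc₁ α hαcont hα (ξ ^ 2 / F + F) (by positivity)
  set G := Gker d F α (ξ ^ 2 / F + F) with hG
  rw [integral_integral_swap]
  swap
  · refine hKi.norm.mono' ?_ ?_
    · apply AEStronglyMeasurable.mul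
      · apply Continuous.aestronglyMeasurable
        fun_prop
      · exact Complex.continuous_ofReal.comp_aestronglyMeasurable hKi.aestronglyMeasurable
    · refine Filter.Eventually.of_forall fun p => ?_
      simp only [Function.uncurry]
      rw [norm_mul, ← Complex.ofReal_mul, ← Complex.ofReal_add, norm_osc, one_mul,
        Complex.norm_real]
  have h1 : ∀ᵐ Y : Eu d, (∫ X : ℝ,
      Complex.exp (-(Complex.I * (ξ * X + (⟪η, Y⟫ : ℝ)))) * (K X Y : ℝ)) =
      Complex.exp (-(Complex.I * (⟪η, Y⟫ : ℝ))) * (G Y : ℝ)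
        + Complex.exp (-(Complex.I * (⟪η, Y⟫ : ℝ))) * (G (-Y) : ℝ) := by
    filter_upwards [ae_ne0 d hd] with Y hY
    have k1 := ker_ft d F c₁ c₂ hF hc₁ α hα ξ Y hY
    have k2 := ker_ft d F c₁ c₂ hF hc₁ α hα ξ (-Y) (neg_ne_zero.2 hY)
    rw [hG, ← k1.2, ← k2.2, ← mul_add, ← integral_add k1.1 k2.1, ← integral_const_mul]
    congr 1
    ext X
    rw [hK, mul_add, neg_add, Complex.exp_add]
    push_cast
    ring
  rw [integral_congr_ae h1]
  have i1 : Integrable (fun Y : Eu d => Complex.exp (-(Complex.I * (⟪η, Y⟫ : ℝ))) * (G Y : ℝ)) := by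
    refine hGi.norm.mono' ?_ ?_
    · apply AEStronglyMeasurable.mul
      · apply Continuous.aestronglyMeasurable
        fun_prop
      · exact Complex.continuous_ofReal.comp_aestronglyMeasurable hGi.aestronglyMeasurable
    · refine Filter.Eventually.of_forall fun p => ?_
      rw [norm_mul, norm_osc, one_mul, Complex.norm_real]
  have i2 : Integrable (fun Y : Eu d => Complex.exp (-(Complex.I * (⟪η, -Y⟫ : ℝ))) * (G Y : ℝ)) := by
    refine hGi.norm.mono' ?_ ?_
    · apply AEStronglyMeasurable.mul
      · apply Continuous.aestronglyMeasurable
        fun_prop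
      · exact Complex.continuous_ofReal.comp_aestronglyMeasurable hGi.aestronglyMeasurable
    · refine Filter.Eventually.of_forall fun p => ?_
      rw [norm_mul, norm_osc, one_mul, Complex.norm_real]
  have i3 : Integrable (fun Y : Eu d => Complex.exp (-(Complex.I * (⟪η, Y⟫ : ℝ))) * (G (-Y) : ℝ)) := by
    have := i2.comp_neg
    simpa only [neg_neg] using this
  rw [integral_add i1 i3]
  have e2 : ∫ Y : Eu d, Complex.exp (-(Complex.I * (⟪η, Y⟫ : ℝ))) * (G (-Y) : ℝ) =
      ∫ Y : Eu d, Complex.exp (-(Complex.I * (⟪η, -Y⟫ : ℝ))) * (G Y : ℝ) := by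
    rw [← integral_neg_eq_self]
    simp only [neg_neg]
  rw [e2, ← integral_add i1 i2, ← integral_complex_ofReal]
  congr 1
  ext Y
  rw [inner_neg_right]
  push_cast
  rw [Complex.two_cos, show -(Complex.I * -((⟪η, Y⟫ : ℝ) : ℂ)) = ((⟪η, Y⟫ : ℝ) : ℂ) * Complex.I by ring,
    show -(Complex.I * ((⟪η, Y⟫ : ℝ) : ℂ)) = -((⟪η, Y⟫ : ℝ) : ℂ) * Complex.I by ring]
  ring

lemma sphere_eq (d : ℕ) (hd : 2 ≤ d) (F c₁ c₂ : ℝ) (hF : 0 < F) (hc₁ : 0 < c₁) (α : Eu d → ℝ)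
    (hαcont : ContinuousOn α (Metric.sphere (0 : Eu d) 1))
    (hα : ∀ ω ∈ Metric.sphere (0 : Eu d) 1, c₁ ≤ α ω ∧ α ω ≤ c₂) (B : ℝ) (hB : 0 < B) (η : Eu d) :
    Integrable (fun ω : Metric.sphere (0 : Eu d) 1 => 2 * Real.pi / Real.sqrt (F * B) *
      Real.exp (-(⟪η, (ω : Eu d)⟫ ^ 2 / (2 * α ω * B)))) (volume : Measure (Eu d)).toSphere ∧
    ∫ Y : Eu d, 2 * Real.cos ⟪η, Y⟫ * Gker d F α B Y =
      ∫ ω : Metric.sphere (0 : Eu d) 1, 2 * Real.pi / Real.sqrt (F * B) *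
      Real.exp (-(⟪η, (ω : Eu d)⟫ ^ 2 / (2 * α ω * B))) ∂(volume : Measure (Eu d)).toSphere := by
  have hGi := G_int d hd F c₁ c₂ hF hc₁ α hαcont hα B hB
  have hfi : Integrable (fun Y : Eu d => 2 * Real.cos ⟪η, Y⟫ * Gker d F α B Y) := by
    refine (hGi.norm.const_mul 2).mono' ?_ ?_
    · apply AEStronglyMeasurable.mul
      · apply Continuous.aestronglyMeasurable
        fun_prop
      · exact hGi.aestronglyMeasurable
    · refine Filter.Eventually.of_forall fun p => ?_
      rw [norm_mul, norm_mul, Real.norm_two, Real.norm_eq_abs (Real.cos _)]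
      gcongr
      have := Real.abs_cos_le_one ⟪η, p⟫
      linarith
  have h := polar d hd _ hfi
  have hin : ∀ ω : Metric.sphere (0 : Eu d) 1,
      ∫ r in Ioi (0 : ℝ), r ^ (d - 1) * (2 * Real.cos ⟪η, r • (ω : Eu d)⟫ * Gker d F α B (r • (ω : Eu d)))
      = 2 * Real.pi / Real.sqrt (F * B) *
      Real.exp (-(⟪η, (ω : Eu d)⟫ ^ 2 / (2 * α ω * B))) := by
    intro ω
    have ha : 0 < α ω := hc₁.trans_le (hα _ ω.2).1
    have hb : 0 < α ω * B / 2 := by positivity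
    have hω : ‖(ω : Eu d)‖ = 1 := by simp
    have hpt : ∀ r ∈ Ioi (0 : ℝ),
        r ^ (d - 1) * (2 * Real.cos ⟪η, r • (ω : Eu d)⟫ * Gker d F α B (r • (ω : Eu d))) =
        Real.sqrt (2 * Real.pi * α ω / F) * 2 *
          (Real.cos (⟪η, (ω : Eu d)⟫ * r) * Real.exp (-(α ω * B / 2 * r ^ 2))) := by
      intro r hr
      have hr : 0 < r := hr
      have hn : ‖r • (ω : Eu d)‖ = r := by rw [norm_smul, hω, mul_one, Real.norm_of_nonneg hr.le]
      have e : r ^ (d - 1) * r ^ (1 - (d : ℝ)) = 1 := by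
        rw [← Real.rpow_natCast, ← Real.rpow_add hr, Nat.cast_sub (by omega)]
        simp
      rw [Gker, hn, smul_smul, inv_mul_cancel₀ hr.ne', one_smul, inner_smul_right, mul_comm r ⟪η, _⟫]
      linear_combination (2 * Real.cos (⟪η, (ω : Eu d)⟫ * r) * Real.sqrt (2 * Real.pi * α ω / F) *
        Real.exp (-(α ω * B / 2 * r ^ 2))) * e
    rw [setIntegral_congr_fun measurableSet_Ioi hpt, integral_const_mul, mul_assoc,
      gaussCosHalf _ hb, ← mul_assoc]
    congr 1
    · rw [← Real.sqrt_mul (by positivity),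
        show 2 * Real.pi * α ω / F * (Real.pi / (α ω * B / 2)) = (2 * Real.pi) ^ 2 / (F * B) by
          field_simp, Real.sqrt_div (by positivity), Real.sqrt_sq (by positivity)]
    · congr 2
      field_simp
      try ring
  simp only [hin] at h
  exact h

lemma exists_unit (d : ℕ) (hd : 2 ≤ d) (η : Eu d) : ∃ e : Eu d, ‖e‖ = 1 ∧ η = ‖η‖ • e := by
  by_cases h : η = 0
  · exact ⟨EuclideanSpace.single ⟨0, by omega⟩ 1, by simp, by simp [h]⟩
  · exact ⟨‖η‖⁻¹ • η, by simp [norm_smul, h], by simp [smul_smul, h]⟩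

theorem core (d : ℕ) (hd : 2 ≤ d) (F c₁ c₂ : ℝ) (hF : 0 < F) (hc₁ : 0 < c₁) (α : Eu d → ℝ)
    (hαcont : ContinuousOn α (Metric.sphere (0 : Eu d) 1))
    (hα : ∀ ω ∈ Metric.sphere (0 : Eu d) 1, c₁ ≤ α ω ∧ α ω ≤ c₂)
    (K : ℝ → Eu d → ℝ) (hK : ∀ X Y, K X Y = gker d F α X Y + gker d F α X (-Y)) :
    Integrable (fun p : ℝ × Eu d => K p.1 p.2) ∧
    ∃ c' : ℝ, 0 < c' ∧ ∀ (ξ : ℝ) (η : Eu d),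
      (∫ X : ℝ, ∫ Y : Eu d,
          Complex.exp (-(Complex.I * (ξ * X + (⟪η, Y⟫ : ℝ)))) * (K X Y : ℝ)).im = 0 ∧
      c' / Real.sqrt (1 + ξ ^ 2 + ‖η‖ ^ 2) ≤
        (∫ X : ℝ, ∫ Y : Eu d,
          Complex.exp (-(Complex.I * (ξ * X + (⟪η, Y⟫ : ℝ)))) * (K X Y : ℝ)).re := by
  have hKi : Integrable (fun p : ℝ × Eu d => K p.1 p.2) := by
    have h := g_int d hd F c₁ c₂ hF hc₁ α hαcont hα
    have hmp : MeasurePreserving (fun p : ℝ × Eu d => (p.1, -p.2)) :=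
      (MeasurePreserving.id (volume : Measure ℝ)).prod
        (Measure.measurePreserving_neg (volume : Measure (Eu d)))
    have h2 := hmp.integrable_comp_of_integrable h
    simp only [hK]
    exact h.add h2
  refine ⟨hKi, ?_⟩
  obtain ⟨c, hc, hslab⟩ := slab d hd
  set M : ℝ := Real.sqrt (2 * c₁ * (1 / F + F)) + 1 with hM
  have hMpos : 0 < M := by positivity
  refine ⟨2 * Real.pi * Real.exp (-1) * c * Real.sqrt (2 * c₁ / F) / M, by positivity, fun ξ η => ?_⟩
  have hB : 0 < ξ ^ 2 / F + F := by positivity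
  obtain ⟨hsi, hse⟩ := sphere_eq d hd F c₁ c₂ hF hc₁ α hαcont hα _ hB η
  rw [ft_eq d hd F c₁ c₂ hF hc₁ α hαcont hα K hK hKi, Complex.ofReal_im, Complex.ofReal_re]
  refine ⟨rfl, ?_⟩
  rw [hse]
  clear hse
  set B := ξ ^ 2 / F + F with hBdef
  obtain ⟨e, he, hηe⟩ := exists_unit d hd η
  set s := Real.sqrt (2 * c₁ * B) with hs
  have hspos : 0 < s := by positivity
  have hs2 : s ^ 2 = 2 * c₁ * B := Real.sq_sqrt (by positivity)
  set δ := s / (s + ‖η‖) with hδ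
  have hden : 0 < s + ‖η‖ := by positivity
  have hδ0 : 0 < δ := by positivity
  have hδ1 : δ ≤ 1 := by
    rw [hδ, div_le_one hden]
    linarith [norm_nonneg η]
  have hηδ : ‖η‖ * δ ≤ s := by
    rw [hδ, mul_div_assoc', div_le_iff₀ hden]
    nlinarith [norm_nonneg η]
  have hmark := mul_meas_ge_le_integral_of_nonneg (Filter.Eventually.of_forall fun ω => by positivity) hsi
    (2 * Real.pi / Real.sqrt (F * B) * Real.exp (-1))
  refine le_trans ?_ hmark
  have hsub : {ω : Metric.sphere (0 : Eu d) 1 | |⟪e, (ω : Eu d)⟫| ≤ δ} ⊆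
      {ω : Metric.sphere (0 : Eu d) 1 | 2 * Real.pi / Real.sqrt (F * B) * Real.exp (-1) ≤
        2 * Real.pi / Real.sqrt (F * B) *
          Real.exp (-(⟪η, (ω : Eu d)⟫ ^ 2 / (2 * α ω * B)))} := by
    intro ω hω
    have hω : |⟪e, (ω : Eu d)⟫| ≤ δ := hω
    have ha := (hα _ ω.2).1
    have ha0 : 0 < α ω := hc₁.trans_le ha
    have h1 : |⟪η, (ω : Eu d)⟫| ≤ s := by
      rw [hηe, real_inner_smul_left, abs_mul, abs_norm]
      exact (mul_le_mul_of_nonneg_left hω (norm_nonneg _)).trans hηδ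
    have h2 : ⟪η, (ω : Eu d)⟫ ^ 2 ≤ 2 * α ω * B := by
      rw [← sq_abs]
      calc |⟪η, (ω : Eu d)⟫| ^ 2 ≤ s ^ 2 := by gcongr
        _ = 2 * c₁ * B := hs2
        _ ≤ _ := by gcongr
    simp only [mem_ofPred_eq]
    gcongr
    exact (div_le_one (by positivity)).2 h2
  have hmono := measureReal_mono (μ := (volume : Measure (Eu d)).toSphere) hsub
  have hfin := (hslab e he δ hδ0 hδ1).trans hmono
  refine le_trans ?_ (mul_le_mul_of_nonneg_left hfin (by positivity))
  have hD : s + ‖η‖ ≤ M * Real.sqrt (1 + ξ ^ 2 + ‖η‖ ^ 2) := by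
    have h1 : s ≤ Real.sqrt (2 * c₁ * (1 / F + F)) * Real.sqrt (1 + ξ ^ 2 + ‖η‖ ^ 2) := by
      rw [hs, ← Real.sqrt_mul (by positivity)]
      apply Real.sqrt_le_sqrt
      rw [mul_assoc (2 * c₁)]
      gcongr
      have : (1 / F + F) * (1 + ξ ^ 2 + ‖η‖ ^ 2) - B =
        1 / F + 1 / F * ‖η‖ ^ 2 + F * (ξ ^ 2 + ‖η‖ ^ 2) := by rw [hBdef]; ring
      have : 0 ≤ 1 / F + 1 / F * ‖η‖ ^ 2 + F * (ξ ^ 2 + ‖η‖ ^ 2) := by positivity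
      linarith
    have h2 : ‖η‖ ≤ Real.sqrt (1 + ξ ^ 2 + ‖η‖ ^ 2) := by
      apply Real.le_sqrt_of_sq_le
      nlinarith [sq_nonneg ξ]
    rw [hM, add_mul, one_mul]
    linarith
  have hratio : s / Real.sqrt (F * B) = Real.sqrt (2 * c₁ / F) := by
    rw [hs, ← Real.sqrt_div (by positivity)]
    congr 1
    field_simp
  have hrhs : 2 * Real.pi / Real.sqrt (F * B) * Real.exp (-1) * (c * δ) =
      2 * Real.pi * Real.exp (-1) * c * Real.sqrt (2 * c₁ / F) / (s + ‖η‖) := by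
    rw [← hratio, hδ]
    ring
  rw [hrhs, div_div]
  gcongr

lemma exp_identity (F X a r : ℝ) (ha : 0 < a) (hr : 0 < r) :
    Real.exp (-(F * X)) * Real.exp (-(F * ((X - a * r ^ 2) / r) ^ 2 / (2 * a))) =
      Real.exp (-(F * a * r ^ 2 / 2)) * Real.exp (-(F / (2 * a * r ^ 2) * X ^ 2)) := by
  rw [← Real.exp_add, ← Real.exp_add]
  congr 1
  field_simp
  ring

/-- Ellipticity of the boundary principal symbol of the conjugated normal
operator `A_F` with Gaussian cutoff: the boundary kernel `K̃` is integrable, its `(X,Y)`-Fourier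
transform is real and positive, and it is bounded below by `c'/√(1 + ξ² + |η|²)`. -/
theorem stmt15 (n : ℕ) (hn : 3 ≤ n) (F c₁ c₂ : ℝ) (hF : 0 < F) (hc₁ : 0 < c₁)
    (σ : Measure ↥(Metric.sphere (0 : EuclideanSpace ℝ (Fin (n - 1))) 1))
    (hσ : ∀ f : EuclideanSpace ℝ (Fin (n - 1)) → ℝ, Integrable f →
      ∫ Y, f Y = ∫ r in Set.Ioi (0 : ℝ),
        (∫ ω : ↥(Metric.sphere (0 : EuclideanSpace ℝ (Fin (n - 1))) 1),
          f (r • (ω : EuclideanSpace ℝ (Fin (n - 1)))) ∂σ) * r ^ (n - 2))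
    (α : EuclideanSpace ℝ (Fin (n - 1)) → ℝ)
    (hαcont : ContinuousOn α (Metric.sphere (0 : EuclideanSpace ℝ (Fin (n - 1))) 1))
    (hα : ∀ ω ∈ Metric.sphere (0 : EuclideanSpace ℝ (Fin (n - 1))) 1, c₁ ≤ α ω ∧ α ω ≤ c₂)
    (K : ℝ → EuclideanSpace ℝ (Fin (n - 1)) → ℝ)
    (hK : ∀ (X : ℝ) (Y : EuclideanSpace ℝ (Fin (n - 1))),
      K X Y = Real.exp (-(F * X)) * ‖Y‖ ^ ((1 : ℝ) - n) *
        (Real.exp (-(F * ((X - α (‖Y‖⁻¹ • Y) * ‖Y‖ ^ 2) / ‖Y‖) ^ 2 / (2 * α (‖Y‖⁻¹ • Y))))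
          + Real.exp (-(F * ((-X + α (-(‖Y‖⁻¹ • Y)) * ‖Y‖ ^ 2) / ‖Y‖) ^ 2 /
              (2 * α (-(‖Y‖⁻¹ • Y))))))) :
    Integrable (fun p : ℝ × EuclideanSpace ℝ (Fin (n - 1)) => K p.1 p.2) ∧
    ∃ c' : ℝ, 0 < c' ∧ ∀ (ξ : ℝ) (η : EuclideanSpace ℝ (Fin (n - 1))),
      (∫ X : ℝ, ∫ Y : EuclideanSpace ℝ (Fin (n - 1)),
          Complex.exp (-(Complex.I * (ξ * X + (⟪η, Y⟫ : ℝ)))) * (K X Y : ℝ)).im = 0 ∧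
      c' / Real.sqrt (1 + ξ ^ 2 + ‖η‖ ^ 2) ≤
        (∫ X : ℝ, ∫ Y : EuclideanSpace ℝ (Fin (n - 1)),
          Complex.exp (-(Complex.I * (ξ * X + (⟪η, Y⟫ : ℝ)))) * (K X Y : ℝ)).re := by
  obtain ⟨d, rfl⟩ : ∃ d, n = d + 1 := ⟨n - 1, by omega⟩
  refine core d (by omega) F c₁ c₂ hF hc₁ α hαcont hα K fun X Y => ?_
  rw [hK]
  have hexp : (1 : ℝ) - ((d + 1 : ℕ) : ℝ) = -(d : ℝ) := by push_cast; ring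
  rw [hexp]
  unfold gker
  have hd0 : -(d : ℝ) ≠ 0 := by
    have : 0 < d := by omega
    simp; omega
  by_cases hY : Y = 0
  · subst hY
    have h0 : ‖(0 : Eu d)‖ ^ (-(d : ℝ)) = 0 := by rw [norm_zero, Real.zero_rpow hd0]
    have h0' : ‖(0 : EuclideanSpace ℝ (Fin (d + 1 - 1)))‖ ^ (-(d : ℝ)) = 0 := h0
    rw [neg_zero, h0']
    ring
  have hY' : -Y ≠ 0 := neg_ne_zero.2 hY
  have hr : 0 < ‖Y‖ := norm_pos_iff.2 hY
  have m1 : 0 < α (‖Y‖⁻¹ • Y) := hc₁.trans_le (hα _ (unit_mem (d := d) hY)).1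
  have m2 : 0 < α (-(‖Y‖⁻¹ • Y)) := by
    have h := hc₁.trans_le (hα _ (unit_mem (d := d) hY')).1
    rwa [norm_neg, smul_neg] at h
  have k1 := exp_identity F X _ _ m1 hr
  have k2 := exp_identity F X _ _ m2 hr
  have e : ((-X + α (-(‖Y‖⁻¹ • Y)) * ‖Y‖ ^ 2) / ‖Y‖) ^ 2 =
      ((X - α (-(‖Y‖⁻¹ • Y)) * ‖Y‖ ^ 2) / ‖Y‖) ^ 2 := by ring
  rw [e, norm_neg, smul_neg]
  linear_combination ‖Y‖ ^ (-(d : ℝ)) * k1 + ‖Y‖ ^ (-(d : ℝ)) * k2
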